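/- Let R be a finite local commutative ring which is not a field. Then Γ(ℤ₂ × R) is partitionable into global defensive alliances if and only if R ≅ ℤ₄ or R ≅ ℤ₂[X]/(X²). Moreover, if Γ(ℤ₂ × R) is partitionable into global defensive alliances, then ψ_g(Γ(ℤ₂ × R)) = 2. -/

import Mathlib

open Classical

/-- The set of zero-divisors of `R` (including `0`). -/
def zeroDivisorSet (R : Type*) [CommRing R] : Set R :=
  {x : R | ∃ y : R, y ≠ 0 ∧ x * y = 0}

/-- Vertices of the zero-divisor graph: the nonzero zero-divisors of `R`. -/
abbrev ZDV (R : Type*) [CommRing R] : Type _ :=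
  {x : R // x ≠ 0 ∧ ∃ y : R, y ≠ 0 ∧ x * y = 0}

/-- The zero-divisor graph `Γ(R)` of a commutative ring `R`: vertices are the nonzero
zero-divisors, and distinct vertices `x`, `y` are adjacent iff `x * y = 0`. -/
def zdGraph (R : Type*) [CommRing R] : SimpleGraph (ZDV R) where
  Adj a b := a ≠ b ∧ (a : R) * (b : R) = 0
  symm := by
    constructor
    intro a b h
    exact ⟨h.1.symm, by rw [mul_comm]; exact h.2⟩
  loopless := by
    constructor
    intro a h
    exact h.1 rfl

/-- `degIn G S v` is the number of neighbors of `v` lying in `S`. -/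
noncomputable def degIn {V : Type*} (G : SimpleGraph V) (S : Set V) (v : V) : ℕ :=
  Set.ncard {u : V | u ∈ S ∧ G.Adj v u}

/-- `S` is a dominating set: every vertex outside `S` has a neighbor in `S`. -/
def IsDominatingSet {V : Type*} (G : SimpleGraph V) (S : Set V) : Prop :=
  ∀ v ∉ S, ∃ u ∈ S, G.Adj v u

/-- `S` is a defensive alliance: `S` is nonempty and every `v ∈ S` satisfies
`deg_S(v) + 1 ≥ deg_{Sᶜ}(v)`. -/
def IsDefensiveAlliance {V : Type*} (G : SimpleGraph V) (S : Set V) : Prop :=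
  S.Nonempty ∧ ∀ v ∈ S, degIn G Sᶜ v ≤ degIn G S v + 1

/-- A global defensive alliance is a defensive alliance that is also a dominating set. -/
def IsGlobalDefensiveAlliance {V : Type*} (G : SimpleGraph V) (S : Set V) : Prop :=
  IsDefensiveAlliance G S ∧ IsDominatingSet G S

/-- `P` is a partition of the vertex set of `G` into global defensive alliances. -/
def IsGDAPartition {V : Type*} (G : SimpleGraph V) (P : Finset (Set V)) : Prop :=
  (∀ S ∈ P, IsGlobalDefensiveAlliance G S) ∧
  (⋃₀ (P : Set (Set V)) = Set.univ) ∧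
  ((P : Set (Set V)).Pairwise Disjoint)

/-- The global defensive alliance partition number `ψ_g(G)`: the maximum number of parts in
a partition of the vertex set into global defensive alliances. -/
noncomputable def psiG {V : Type*} (G : SimpleGraph V) : ℕ :=
  sSup {n : ℕ | ∃ P : Finset (Set V), IsGDAPartition G P ∧ P.card = n}

/-- `G` is partitionable into global defensive alliances iff `ψ_g(G) ≥ 2`. -/
def PartitionableGDA {V : Type*} (G : SimpleGraph V) : Prop :=
  2 ≤ psiG G

/-- The global defensive alliance number `γ_a(G)`: the minimum cardinality of a global
defensive alliance. -/
noncomputable def gammaA {V : Type*} (G : SimpleGraph V) : ℕ :=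
  sInf {n : ℕ | ∃ S : Set V, IsGlobalDefensiveAlliance G S ∧ S.ncard = n}

/-!
A leaf `w` of a graph forces `ψ_g ≤ 2`, because every dominating set meets `{w} ∪ N(w)`; in
`Γ(ℤ₂ × R)` the vertex `(0, 1)` is a leaf, hanging at `(1, 0)`.

Let `S ∋ (1, 0)` and `Sᶜ` both be global defensive alliances. Every leaf `(0, u)` with `u` a unit
must lie in `Sᶜ`, and counting neighbours of `(1, 0)` shows that `S` contains `(0, n)` for
every nonzero `n` in the maximal ideal `𝔪`. Such a `(0, n)` is dominated by some `(1, x) ∉ S`, whose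
only neighbour can be `(0, n)`, so the annihilator of `x` is `{0, n}`. This forces `𝔪² = 0`, then
`𝔪 = {0, n}`, and multiplication by `n`, with kernel and image `𝔪`, gives `|R| = |𝔪|² = 4`.
-/

open Polynomial IsLocalRing

theorem exists_ne_zero_sq_eq_zero_of_not_isReduced {M : Type*} [MonoidWithZero M]
    (hM : ¬ IsReduced M) : ∃ s : M, s ≠ 0 ∧ s ^ 2 = 0 := by
  rw [isReduced_iff_pow_one_lt 2 one_lt_two] at hM
  push Not at hM
  obtain ⟨s, hs, hs0⟩ := hM
  exact ⟨s, hs0, hs⟩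

section DualNumbers

variable {K A : Type*} [Field K] [CommRing A] [Algebra K A]

theorem X_sq_dvd_of_aeval_eq_zero {s : A} (hs0 : s ≠ 0) (hs : s ^ 2 = 0) {p : K[X]}
    (hp : aeval s p = 0) : X ^ 2 ∣ p := by
  have taylor : algebraMap K A (p.coeff 0) + algebraMap K A (p.coeff 1) * s = 0 := by
    have h := aeval_add_of_sq_eq_zero p 0 s hs
    simpa [hp, ← coeff_zero_eq_aeval_zero', coeff_derivative, eq_comm] using h
  have h0 : p.coeff 0 = 0 := by
    have : p.coeff 0 • s = 0 := by
      rw [Algebra.smul_def]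
      linear_combination s * taylor - algebraMap K A (p.coeff 1) * hs
    exact (smul_eq_zero.1 this).resolve_right hs0
  have h1 : p.coeff 1 = 0 := by
    have : p.coeff 1 • s = 0 := by simpa [h0, Algebra.smul_def] using taylor
    exact (smul_eq_zero.1 this).resolve_right hs0
  rw [X_pow_dvd_iff]
  intro d hd
  interval_cases d <;> assumption

theorem nonempty_algEquiv_quotient_X_sq (hA : Module.finrank K A = 2) (hred : ¬ IsReduced A) :
    Nonempty (A ≃ₐ[K] K[X] ⧸ Ideal.span {(X : K[X]) ^ 2}) := by
  obtain ⟨s, hs0, hs⟩ := exists_ne_zero_sq_eq_zero_of_not_isReduced hred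
  have hvanish : ∀ p ∈ Ideal.span {(X : K[X]) ^ 2}, aeval s p = 0 := by
    intro p hp
    obtain ⟨q, rfl⟩ := Ideal.mem_span_singleton.1 hp
    simp [hs]
  let f : K[X] ⧸ Ideal.span {(X : K[X]) ^ 2} →ₐ[K] A := Ideal.Quotient.liftₐ _ (aeval s) hvanish
  have hinj : Function.Injective f :=
    RingHom.lift_injective_of_ker_le_ideal _ hvanish fun p hp ↦
      Ideal.mem_span_singleton.2 (X_sq_dvd_of_aeval_eq_zero hs0 hs hp)
  have hdim : Module.finrank K (K[X] ⧸ Ideal.span {(X : K[X]) ^ 2}) = Module.finrank K A := by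
    rw [finrank_quotient_span_eq_natDegree, natDegree_X_pow, hA]
  have : FiniteDimensional K A := Module.finite_of_finrank_eq_succ hA
  have : FiniteDimensional K (K[X] ⧸ Ideal.span {(X : K[X]) ^ 2}) :=
    Module.finite_of_finrank_eq_succ (hdim.trans hA)
  have hsurj : Function.Surjective f :=
    (LinearMap.injective_iff_surjective_of_finrank_eq_finrank (f := f.toLinearMap) hdim).1 hinj
  exact ⟨(AlgEquiv.ofBijective f ⟨hinj, hsurj⟩).symm⟩

end DualNumbers

theorem natCard_zmod_two_quotient_X_sq :
    Nat.card ((ZMod 2)[X] ⧸ Ideal.span {(X : (ZMod 2)[X]) ^ 2}) = 4 := by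
  have hdim : Module.finrank (ZMod 2) ((ZMod 2)[X] ⧸ Ideal.span {(X : (ZMod 2)[X]) ^ 2}) = 2 := by
    rw [finrank_quotient_span_eq_natDegree, natDegree_X_pow]
  have := Module.finite_of_finrank_eq_succ hdim
  rw [Module.natCard_eq_pow_finrank (K := ZMod 2), hdim, Nat.card_zmod]
  norm_num

theorem natCard_eq_four_iff_of_not_isReduced {R : Type*} [CommRing R] (hred : ¬ IsReduced R) :
    Nat.card R = 4 ↔ Nonempty (R ≃+* ZMod 4) ∨
      Nonempty (R ≃+* ((ZMod 2)[X] ⧸ Ideal.span {(X : (ZMod 2)[X]) ^ 2})) := by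
  refine ⟨fun hcard ↦ ?_, ?_⟩
  · have : Finite R := Nat.finite_of_card_ne_zero (by omega)
    have : Nontrivial R := Finite.one_lt_card_iff_nontrivial.1 (by omega)
    have hfour : ((2 ^ 2 : ℕ) : R) = 0 := by
      have := Fintype.ofFinite R
      rw [show 2 ^ 2 = Nat.card R from hcard.symm, Nat.card_eq_fintype_card, Nat.cast_card_eq_zero]
    obtain ⟨i, hi, hchar⟩ := (Nat.dvd_prime_pow Nat.prime_two).1 (ringChar.dvd hfour)
    have hR : CharP R (2 ^ i) := hchar ▸ ringChar.charP R
    interval_cases i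
    · exact absurd rfl (CharP.char_ne_one R 1)
    · right
      have : CharP R 2 := hR
      let := ZMod.algebra R 2
      have hdim : Module.finrank (ZMod 2) R = 2 := by
        refine Nat.pow_right_injective le_rfl ?_
        simpa [hcard] using (Module.natCard_eq_pow_finrank (K := ZMod 2) (V := R)).symm
      exact (nonempty_algEquiv_quotient_X_sq hdim hred).map AlgEquiv.toRingEquiv
    · left
      have : CharP R 4 := hR
      have : Fintype R := Fintype.ofFinite R
      exact ⟨(ZMod.ringEquiv R (by rwa [Fintype.card_eq_nat_card])).symm⟩
  · rintro (⟨⟨e⟩⟩ | ⟨⟨e⟩⟩)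
    · rw [Nat.card_congr e.toEquiv, Nat.card_zmod]
    · rw [Nat.card_congr e.toEquiv, natCard_zmod_two_quotient_X_sq]

section LocalRing

variable {R : Type*} [CommRing R] [IsLocalRing R]

theorem eq_zero_of_mul_eq_self_of_mem_maximalIdeal {k n : R} (hk : k ∈ maximalIdeal R)
    (h : k * n = n) : n = 0 := by
  have hu : IsUnit (1 - k) := isUnit_one_sub_self_of_mem_nonunits k hk
  exact hu.mul_right_eq_zero.1 (by linear_combination -h)

theorem mem_maximalIdeal_of_mul_eq_zero {x y : R} (hy : y ≠ 0) (hxy : x * y = 0) :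
    x ∈ maximalIdeal R :=
  fun hx ↦ hy (hx.mul_right_eq_zero.1 hxy)

theorem two_mul_natCard_maximalIdeal_le [Finite R] :
    2 * Nat.card (maximalIdeal R) ≤ Nat.card R := by
  have hindex : 1 < (maximalIdeal R).toAddSubgroup.index :=
    AddSubgroup.one_lt_index_of_ne_top fun h ↦
      Ideal.IsPrime.ne_top' <|
        Submodule.toAddSubgroup_injective (h.trans Submodule.top_toAddSubgroup.symm)
  rw [← (maximalIdeal R).toAddSubgroup.card_mul_index, mul_comm]
  exact Nat.mul_le_mul_left _ hindex

/-- If the annihilator of `x` is `{0, n}`, it contains `kn` for every `k` in the maximal ideal, and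
`kn = n` is impossible, so `kn = 0`. Hence the maximal ideal squares to zero and lies in the
annihilator of `x`. -/
theorem maximalIdeal_eq_pair_of_forall_annihilator
    (h : ∀ n ∈ maximalIdeal R, n ≠ 0 →
      ∃ x ∈ maximalIdeal R, x * n = 0 ∧ ∀ y, x * y = 0 → y = 0 ∨ y = n)
    {s : R} (hs : s ∈ maximalIdeal R) (hs0 : s ≠ 0) : (maximalIdeal R : Set R) = {0, s} := by
  have hsq : ∀ k ∈ maximalIdeal R, ∀ n ∈ maximalIdeal R, k * n = 0 := by
    intro k hk n hn
    by_cases hn0 : n = 0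
    · rw [hn0, mul_zero]
    obtain ⟨x, -, hxn, hann⟩ := h n hn hn0
    refine (hann (k * n) (by linear_combination k * hxn)).resolve_right fun hkn ↦ ?_
    exact hn0 (eq_zero_of_mul_eq_self_of_mem_maximalIdeal hk hkn)
  obtain ⟨x, hx, -, hann⟩ := h s hs hs0
  refine Set.Subset.antisymm (fun y hy ↦ hann y (hsq x hx y hy)) ?_
  rintro y (rfl | rfl)
  exacts [zero_mem _, hs]

theorem exists_maximalIdeal_eq_pair_of_natCard_eq_four (hR : ¬ IsField R)
    (hcard : Nat.card R = 4) : ∃ s : R, s ≠ 0 ∧ (maximalIdeal R : Set R) = {0, s} := by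
  have : Finite R := Nat.finite_of_card_ne_zero (by omega)
  have hle := two_mul_natCard_maximalIdeal_le (R := R)
  have hlt : 1 < Nat.card (maximalIdeal R) := by
    rw [Finite.one_lt_card_iff_nontrivial, Submodule.nontrivial_iff_ne_bot]
    exact fun h ↦ hR (isField_iff_maximalIdeal_eq.2 h)
  have htwo : (maximalIdeal R : Set R).ncard = 2 := by
    rw [← Nat.card_coe_set_eq]
    exact (by omega : Nat.card (maximalIdeal R) = 2)
  obtain ⟨s, hs, hs0⟩ := Set.exists_ne_of_one_lt_ncard (htwo ▸ one_lt_two) 0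
  refine ⟨s, hs0, (Set.eq_of_subset_of_ncard_le ?_ ?_).symm⟩
  · rintro y (rfl | rfl)
    exacts [zero_mem _, hs]
  · rw [htwo, Set.ncard_pair hs0.symm]

theorem mul_self_eq_zero_of_maximalIdeal_eq_pair {s : R} (hs0 : s ≠ 0)
    (hm : (maximalIdeal R : Set R) = {0, s}) : s * s = 0 := by
  have hs : s ∈ maximalIdeal R := hm.ge (by simp)
  obtain h | h := hm.le (Ideal.mul_mem_left _ s hs)
  · exact h
  · exact absurd (eq_zero_of_mul_eq_self_of_mem_maximalIdeal hs h) hs0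

theorem natCard_eq_four_of_maximalIdeal_eq_pair {s : R} (hs0 : s ≠ 0)
    (hm : (maximalIdeal R : Set R) = {0, s}) : Nat.card R = 4 := by
  have hss := mul_self_eq_zero_of_maximalIdeal_eq_pair hs0 hm
  have hs : s ∈ maximalIdeal R := hm.ge (by simp)
  have hker : ((AddMonoidHom.mulRight s).ker : Set R) = {0, s} := by
    refine Set.Subset.antisymm (fun r hr ↦ hm.le (mem_maximalIdeal_of_mul_eq_zero hs0 hr)) ?_
    rintro r (rfl | rfl)
    exacts [zero_mem _, hss]
  have hrange : ((AddMonoidHom.mulRight s).range : Set R) = {0, s} := by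
    refine Set.Subset.antisymm ?_ ?_
    · rintro _ ⟨r, rfl⟩
      exact hm.le (Ideal.mul_mem_left _ r hs)
    · rintro r (rfl | rfl)
      exacts [zero_mem _, ⟨1, one_mul r⟩]
  calc Nat.card R
      = Nat.card (AddMonoidHom.mulRight s).ker * Nat.card (AddMonoidHom.mulRight s).range := by
        rw [← AddSubgroup.index_ker, AddSubgroup.card_mul_index]
    _ = ({0, s} : Set R).ncard * ({0, s} : Set R).ncard :=
        congrArg₂ (· * ·) (congrArg Set.ncard hker) (congrArg Set.ncard hrange)
    _ = 4 := by rw [Set.ncard_pair hs0.symm]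

end LocalRing

section Graph

variable {V : Type*} {G : SimpleGraph V}

theorem degIn_mono [Finite V] {S T : Set V} (h : S ⊆ T) (v : V) : degIn G S v ≤ degIn G T v :=
  Set.ncard_le_ncard (fun _ hu ↦ ⟨h hu.1, hu.2⟩) (Set.toFinite _)

theorem degIn_le_one_of_forall_eq {S : Set V} {v w : V} (h : ∀ u ∈ S, G.Adj v u → u = w) :
    degIn G S v ≤ 1 := by
  have hsub : {u | u ∈ S ∧ G.Adj v u} ⊆ {w} := fun u hu ↦ h u hu.1 hu.2
  exact (Set.ncard_le_ncard hsub).trans_eq (Set.ncard_singleton w)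

theorem IsDominatingSet.mono {S T : Set V} (hS : IsDominatingSet G S) (h : S ⊆ T) :
    IsDominatingSet G T := by
  intro v hv
  obtain ⟨u, hu, hvu⟩ := hS v fun hvS ↦ hv (h hvS)
  exact ⟨u, h hu, hvu⟩

theorem IsGlobalDefensiveAlliance.sUnion [Finite V] {P : Set (Set V)} (hP : P.Nonempty)
    (h : ∀ S ∈ P, IsGlobalDefensiveAlliance G S) : IsGlobalDefensiveAlliance G (⋃₀ P) := by
  obtain ⟨S, hS⟩ := hP
  have hsub : ∀ {T}, T ∈ P → T ⊆ ⋃₀ P := Set.subset_sUnion_of_mem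
  refine ⟨⟨(h S hS).1.1.mono (hsub hS), ?_⟩, (h S hS).2.mono (hsub hS)⟩
  rintro v ⟨T, hT, hvT⟩
  calc degIn G (⋃₀ P)ᶜ v ≤ degIn G Tᶜ v := degIn_mono (Set.compl_subset_compl.2 (hsub hT)) v
    _ ≤ degIn G T v + 1 := (h T hT).1.2 v hvT
    _ ≤ degIn G (⋃₀ P) v + 1 := Nat.add_le_add_right (degIn_mono (hsub hT) v) 1

theorem IsGDAPartition.pair {S : Set V} (hS : IsGlobalDefensiveAlliance G S)
    (hSc : IsGlobalDefensiveAlliance G Sᶜ) : IsGDAPartition G {S, Sᶜ} := by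
  refine ⟨?_, ?_, ?_⟩
  · simp [hS, hSc]
  · simp
  · rw [Finset.coe_pair]
    exact Set.pairwise_pair_of_symm.2 fun _ ↦ disjoint_compl_right

theorem partitionableGDA_iff_exists_mem [Finite V] (v : V) :
    PartitionableGDA G ↔
      ∃ S, v ∈ S ∧ IsGlobalDefensiveAlliance G S ∧ IsGlobalDefensiveAlliance G Sᶜ := by
  constructor
  · intro h
    obtain ⟨_, ⟨P, ⟨hgda, hcover, hdisj⟩, rfl⟩, hcard⟩ :=
      exists_lt_of_lt_csSup' (Nat.lt_of_succ_le h)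
    obtain ⟨S, hS, hvS⟩ : v ∈ ⋃₀ (P : Set (Set V)) := hcover ▸ Set.mem_univ v
    obtain ⟨T, hT, hTS⟩ := Finset.exists_mem_ne hcard S
    have hcompl : Sᶜ = ⋃₀ ((P : Set (Set V)) \ {S}) := by
      ext u
      constructor
      · intro hu
        obtain ⟨U, hU, huU⟩ : u ∈ ⋃₀ (P : Set (Set V)) := hcover ▸ Set.mem_univ u
        exact ⟨U, ⟨hU, fun hUS ↦ hu (hUS ▸ huU)⟩, huU⟩
      · rintro ⟨U, ⟨hU, hUS⟩, huU⟩
        exact Set.disjoint_left.1 (hdisj hU hS hUS) huU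
    refine ⟨S, hvS, hgda S hS, ?_⟩
    rw [hcompl]
    exact .sUnion ⟨T, hT, hTS⟩ fun U hU ↦ hgda U hU.1
  · rintro ⟨S, hvS, hS, hSc⟩
    have hne : S ≠ Sᶜ := fun h ↦ (h ▸ hvS : v ∈ Sᶜ) hvS
    have hbdd : BddAbove {n | ∃ P : Finset (Set V), IsGDAPartition G P ∧ P.card = n} := by
      refine ((Set.finite_range (Finset.card (α := Set V))).subset ?_).bddAbove
      rintro _ ⟨P, -, rfl⟩
      exact ⟨P, rfl⟩
    exact le_csSup hbdd ⟨{S, Sᶜ}, .pair hS hSc, Finset.card_pair hne⟩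

theorem IsGDAPartition.card_le_ncard_neighborSet_add_one {P : Finset (Set V)}
    (hP : IsGDAPartition G P) {w : V} (hw : (G.neighborSet w).Finite) :
    P.card ≤ (G.neighborSet w).ncard + 1 := by
  obtain ⟨hgda, -, hdisj⟩ := hP
  have hmeet : ∀ S ∈ P, ∃ u ∈ insert w (G.neighborSet w), u ∈ S := by
    intro S hS
    by_cases hwS : w ∈ S
    · exact ⟨w, Set.mem_insert _ _, hwS⟩
    · obtain ⟨u, huS, hwu⟩ := (hgda S hS).2 w hwS
      exact ⟨u, Set.mem_insert_of_mem _ hwu, huS⟩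
  have : Nonempty V := ⟨w⟩
  choose! f hf hfS using hmeet
  have hinj : Set.InjOn f (P : Set (Set V)) := by
    intro S hS T hT hST
    by_contra hne
    exact Set.disjoint_left.1 (hdisj hS hT hne) (hfS S hS) (hST ▸ hfS T hT)
  calc P.card = (P : Set (Set V)).ncard := (Set.ncard_coe_finset P).symm
    _ ≤ (insert w (G.neighborSet w)).ncard := Set.ncard_le_ncard_of_injOn f hf hinj (hw.insert w)
    _ ≤ (G.neighborSet w).ncard + 1 := Set.ncard_insert_le _ _

theorem psiG_le_ncard_neighborSet_add_one {w : V} (hw : (G.neighborSet w).Finite) :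
    psiG G ≤ (G.neighborSet w).ncard + 1 := by
  refine csSup_le' ?_
  rintro _ ⟨P, hP, rfl⟩
  exact hP.card_le_ncard_neighborSet_add_one hw

end Graph

section Vertices

variable {R : Type*} [CommRing R]

/-- The vertex `(0, r)` of `Γ(ℤ₂ × R)`, for `r ≠ 0`. -/
def zeroVertex (r : R) (hr : r ≠ 0) : ZDV (ZMod 2 × R) :=
  ⟨(0, r), by simp [hr], (1, 0), by simp, by simp⟩

/-- The vertex `(1, x)` of `Γ(ℤ₂ × R)`, for a zero-divisor `x` (possibly `0`). -/
def oneVertex (x : R) (hx : ∃ y, y ≠ 0 ∧ x * y = 0) : ZDV (ZMod 2 × R) :=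
  ⟨(1, x), by simp, (0, hx.choose), by simp [hx.choose_spec.1], by simp [hx.choose_spec.2]⟩

/-- The vertex `(1, 0)` of `Γ(ℤ₂ × R)`, adjacent to exactly the vertices `(0, r)`. -/
abbrev centre (R : Type*) [CommRing R] [Nontrivial R] : ZDV (ZMod 2 × R) :=
  oneVertex 0 ⟨1, one_ne_zero, zero_mul 1⟩

/-- The set of `r : R` for which `(0, r)` is a vertex of `Γ(ℤ₂ × R)` lying in `S`. It allows
degrees into `S` to be counted inside `R`. -/
def zeroFibre (S : Set (ZDV (ZMod 2 × R))) : Set R :=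
  {r | ∃ hr : r ≠ 0, zeroVertex r hr ∈ S}

theorem exists_eq_zeroVertex_or_exists_eq_oneVertex (v : ZDV (ZMod 2 × R)) :
    (∃ r hr, v = zeroVertex r hr) ∨ ∃ x hx, v = oneVertex x hx := by
  obtain ⟨⟨e, r⟩, hv, ⟨e', y⟩, hy, hmul⟩ := v
  by_cases he : e = 0
  · subst he
    exact .inl ⟨r, fun hr ↦ hv (by rw [hr]; rfl), rfl⟩
  · obtain rfl : e = 1 := Fin.eq_one_of_ne_zero e he
    obtain ⟨rfl, hry⟩ : e' = 0 ∧ r * y = 0 := by simpa using hmul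
    exact .inr ⟨r, ⟨y, by simpa using hy, hry⟩, rfl⟩

theorem oneVertex_ne_zeroVertex {x r : R} {hx : ∃ y, y ≠ 0 ∧ x * y = 0} {hr : r ≠ 0} :
    oneVertex x hx ≠ zeroVertex r hr := by
  simp [oneVertex, zeroVertex]

theorem zeroVertex_inj {r t : R} {hr : r ≠ 0} {ht : t ≠ 0} :
    zeroVertex r hr = zeroVertex t ht ↔ r = t := by
  simp [zeroVertex]

theorem oneVertex_inj {x z : R} {hx : ∃ y, y ≠ 0 ∧ x * y = 0} {hz : ∃ y, y ≠ 0 ∧ z * y = 0} :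
    oneVertex x hx = oneVertex z hz ↔ x = z := by
  simp [oneVertex]

theorem zdGraph_adj_oneVertex_zeroVertex {x r : R} {hx : ∃ y, y ≠ 0 ∧ x * y = 0} {hr : r ≠ 0} :
    (zdGraph (ZMod 2 × R)).Adj (oneVertex x hx) (zeroVertex r hr) ↔ x * r = 0 := by
  simp [zdGraph, oneVertex, zeroVertex]

theorem not_zdGraph_adj_oneVertex_oneVertex {x z : R} {hx : ∃ y, y ≠ 0 ∧ x * y = 0}
    {hz : ∃ y, y ≠ 0 ∧ z * y = 0} :
    ¬ (zdGraph (ZMod 2 × R)).Adj (oneVertex x hx) (oneVertex z hz) := by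
  simp [zdGraph, oneVertex]

theorem mul_eq_zero_of_zdGraph_adj_zeroVertex {r t : R} {hr : r ≠ 0} {ht : t ≠ 0}
    (h : (zdGraph (ZMod 2 × R)).Adj (zeroVertex r hr) (zeroVertex t ht)) : r * t = 0 :=
  congrArg Prod.snd h.2

theorem zeroFibre_compl (S : Set (ZDV (ZMod 2 × R))) :
    zeroFibre Sᶜ = (insert 0 (zeroFibre S))ᶜ := by
  ext r
  by_cases hr : r = 0 <;> simp [zeroFibre, hr]

theorem degIn_oneVertex (S : Set (ZDV (ZMod 2 × R))) {x : R} (hx : ∃ y, y ≠ 0 ∧ x * y = 0) :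
    degIn (zdGraph (ZMod 2 × R)) S (oneVertex x hx) = {r ∈ zeroFibre S | x * r = 0}.ncard := by
  symm
  refine Set.ncard_congr (fun r hr ↦ zeroVertex r hr.1.choose) ?_ ?_ ?_
  · rintro r ⟨⟨hr, hrS⟩, hxr⟩
    exact ⟨hrS, zdGraph_adj_oneVertex_zeroVertex.2 hxr⟩
  · intro r t _ _ h
    exact zeroVertex_inj.1 h
  · rintro v ⟨hvS, hv⟩
    obtain ⟨r, hr, rfl⟩ | ⟨z, hz, rfl⟩ := exists_eq_zeroVertex_or_exists_eq_oneVertex v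
    · exact ⟨r, ⟨⟨hr, hvS⟩, zdGraph_adj_oneVertex_zeroVertex.1 hv⟩, rfl⟩
    · exact absurd hv not_zdGraph_adj_oneVertex_oneVertex

variable [Nontrivial R]

theorem degIn_centre (S : Set (ZDV (ZMod 2 × R))) :
    degIn (zdGraph (ZMod 2 × R)) S (centre R) = (zeroFibre S).ncard := by
  simp [degIn_oneVertex]

theorem zeroFibre_pair {s : R} (hs0 : s ≠ 0) :
    zeroFibre {centre R, zeroVertex s hs0} = {s} := by
  ext r
  simp only [zeroFibre, Set.mem_ofPred_eq, Set.mem_insert_iff, Set.mem_singleton_iff,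
    oneVertex_ne_zeroVertex.symm, zeroVertex_inj, false_or, exists_prop]
  exact ⟨And.right, fun h ↦ ⟨h ▸ hs0, h⟩⟩

theorem neighborSet_zeroVertex_of_mem_nonZeroDivisors {u : R} (hu : u ∈ nonZeroDivisors R) :
    (zdGraph (ZMod 2 × R)).neighborSet (zeroVertex u (nonZeroDivisors.ne_zero hu)) =
      {centre R} := by
  ext v
  rw [SimpleGraph.mem_neighborSet, Set.mem_singleton_iff]
  refine ⟨fun h ↦ ?_, ?_⟩
  · obtain ⟨r, hr, rfl⟩ | ⟨z, hz, rfl⟩ := exists_eq_zeroVertex_or_exists_eq_oneVertex v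
    · refine absurd (hu.1 r ?_) hr
      exact mul_eq_zero_of_zdGraph_adj_zeroVertex h
    · exact oneVertex_inj.2 (hu.2 z (zdGraph_adj_oneVertex_zeroVertex.1 h.symm))
  · rintro rfl
    exact (zdGraph_adj_oneVertex_zeroVertex.2 (zero_mul u)).symm

theorem psiG_zdGraph_zmod_two_prod_le_two (R : Type*) [CommRing R] [Nontrivial R] :
    psiG (zdGraph (ZMod 2 × R)) ≤ 2 := by
  have hleaf := neighborSet_zeroVertex_of_mem_nonZeroDivisors (one_mem (nonZeroDivisors R))
  have hle := psiG_le_ncard_neighborSet_add_one (hleaf ▸ Set.finite_singleton (centre R))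
  rwa [hleaf, Set.ncard_singleton] at hle

theorem mem_zeroFibre_of_isDominatingSet {T : Set (ZDV (ZMod 2 × R))}
    (hT : IsDominatingSet (zdGraph (ZMod 2 × R)) T) (hcentre : centre R ∉ T) {u : R}
    (hu : u ∈ nonZeroDivisors R) : u ∈ zeroFibre T := by
  refine ⟨nonZeroDivisors.ne_zero hu, by_contra fun h ↦ ?_⟩
  obtain ⟨v, hvT, hv⟩ := hT _ h
  rw [← SimpleGraph.mem_neighborSet, neighborSet_zeroVertex_of_mem_nonZeroDivisors hu] at hv
  exact hcentre (hv ▸ hvT)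

end Vertices

section Partition

variable {R : Type*} [CommRing R] [IsLocalRing R]

/-- A unit `u` gives a leaf `(0, u)` hanging at `(1, 0)`, so `(0, u) ∉ S`. The alliance condition at
`(1, 0)` then reads `|R| ≤ 2 |{r | r = 0 ∨ (0, r) ∈ S}| ≤ 2 |𝔪| ≤ |R|`. -/
theorem insert_zero_zeroFibre_eq_maximalIdeal [Finite R] {S : Set (ZDV (ZMod 2 × R))}
    (hcentre : centre R ∈ S) (hS : IsDefensiveAlliance (zdGraph (ZMod 2 × R)) S)
    (hSc : IsDominatingSet (zdGraph (ZMod 2 × R)) Sᶜ) :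
    insert 0 (zeroFibre S) = (maximalIdeal R : Set R) := by
  have hsub : insert 0 (zeroFibre S) ⊆ (maximalIdeal R : Set R) := by
    rintro r (rfl | hr)
    · exact zero_mem _
    · intro hu
      have : r ∈ zeroFibre Sᶜ :=
        mem_zeroFibre_of_isDominatingSet hSc (not_not.2 hcentre) hu.mem_nonZeroDivisors
      rw [zeroFibre_compl] at this
      exact this (Set.mem_insert_of_mem 0 hr)
  have hinsert : (insert 0 (zeroFibre S)).ncard = (zeroFibre S).ncard + 1 :=
    Set.ncard_insert_of_notMem fun h ↦ h.1 rfl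
  have halliance : (insert 0 (zeroFibre S))ᶜ.ncard ≤ (insert 0 (zeroFibre S)).ncard := by
    have h := hS.2 _ hcentre
    rwa [degIn_centre, degIn_centre, zeroFibre_compl, ← hinsert] at h
  have hcompl := Set.ncard_add_ncard_compl (insert 0 (zeroFibre S))
  have hhalf := two_mul_natCard_maximalIdeal_le (R := R)
  have hge : Nat.card (maximalIdeal R) ≤ (insert 0 (zeroFibre S)).ncard := by omega
  exact Set.eq_of_subset_of_ncard_le hsub hge

theorem exists_annihilator_eq_pair [Finite R] {S : Set (ZDV (ZMod 2 × R))}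
    (hcentre : centre R ∈ S) (hfibre : insert 0 (zeroFibre S) = (maximalIdeal R : Set R))
    (hSc : IsGlobalDefensiveAlliance (zdGraph (ZMod 2 × R)) Sᶜ)
    {n : R} (hn : n ∈ maximalIdeal R) (hn0 : n ≠ 0) :
    ∃ x ∈ maximalIdeal R, x * n = 0 ∧ ∀ y, x * y = 0 → y = 0 ∨ y = n := by
  have mem_fibre : ∀ y ∈ maximalIdeal R, y ≠ 0 → y ∈ zeroFibre S := fun y hy hy0 ↦
    (hfibre.ge hy).resolve_left hy0
  obtain ⟨_, hnS⟩ := mem_fibre n hn hn0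
  obtain ⟨v, hvS, hv⟩ := hSc.2 _ (not_not.2 hnS)
  obtain ⟨r, hr, rfl⟩ | ⟨x, hx, rfl⟩ := exists_eq_zeroVertex_or_exists_eq_oneVertex v
  · have hrn : r * n = 0 := mul_eq_zero_of_zdGraph_adj_zeroVertex hv.symm
    exact absurd (mem_fibre r (mem_maximalIdeal_of_mul_eq_zero hn0 hrn) hr).2 hvS
  have hxn : x * n = 0 := zdGraph_adj_oneVertex_zeroVertex.1 hv.symm
  have hx0 : x ≠ 0 := by
    rintro rfl
    exact hvS hcentre
  have ann_mem_fibre : ∀ y, x * y = 0 → y ≠ 0 → y ∈ zeroFibre S := fun y hxy hy0 ↦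
    mem_fibre y (mem_maximalIdeal_of_mul_eq_zero hx0 (by rwa [mul_comm])) hy0
  have hdeg_compl : {y ∈ zeroFibre Sᶜ | x * y = 0} = ∅ := by
    refine Set.eq_empty_of_forall_notMem fun y ⟨hy, hxy⟩ ↦ ?_
    exact hy.2 (ann_mem_fibre y hxy hy.1).2
  have hdeg : {y ∈ zeroFibre S | x * y = 0}.ncard ≤ 1 := by
    have h := hSc.1.2 _ hvS
    rwa [compl_compl, degIn_oneVertex, degIn_oneVertex, hdeg_compl, Set.ncard_empty] at h
  refine ⟨x, mem_maximalIdeal_of_mul_eq_zero hn0 hxn, hxn, fun y hxy ↦ ?_⟩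
  refine or_iff_not_imp_left.2 fun hy0 ↦ ?_
  exact (Set.ncard_le_one_iff (Set.toFinite _)).1 hdeg ⟨ann_mem_fibre y hxy hy0, hxy⟩
    ⟨mem_fibre n hn hn0, hxn⟩

section MaximalIdealPair

variable {s : R} (hs0 : s ≠ 0) (hm : (maximalIdeal R : Set R) = {0, s})
include hs0 hm

theorem vertex_cases_of_maximalIdeal_eq_pair (v : ZDV (ZMod 2 × R)) :
    v ∈ ({centre R, zeroVertex s hs0} : Set (ZDV (ZMod 2 × R))) ∨
      v = oneVertex s ⟨s, hs0, mul_self_eq_zero_of_maximalIdeal_eq_pair hs0 hm⟩ ∨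
      ∃ u, ∃ hu : IsUnit u, v = zeroVertex u hu.ne_zero := by
  obtain ⟨r, hr, rfl⟩ | ⟨x, hx, rfl⟩ := exists_eq_zeroVertex_or_exists_eq_oneVertex v
  · by_cases hu : IsUnit r
    · exact .inr (.inr ⟨r, hu, rfl⟩)
    · obtain rfl := (hm.le hu).resolve_left hr
      simp
  · obtain ⟨y, hy, hxy⟩ := hx
    obtain rfl | rfl := hm.le (mem_maximalIdeal_of_mul_eq_zero hy hxy) <;> simp

theorem isGlobalDefensiveAlliance_pair :
    IsGlobalDefensiveAlliance (zdGraph (ZMod 2 × R)) {centre R, zeroVertex s hs0} := by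
  have hcard := natCard_eq_four_of_maximalIdeal_eq_pair hs0 hm
  have : Finite R := Nat.finite_of_card_ne_zero (by omega)
  have hss := mul_self_eq_zero_of_maximalIdeal_eq_pair hs0 hm
  set S : Set (ZDV (ZMod 2 × R)) := {centre R, zeroVertex s hs0} with hS
  refine ⟨⟨⟨centre R, by simp [hS]⟩, ?_⟩, fun v hv ↦ ?_⟩
  · rintro v (rfl | rfl)
    · have hcompl := Set.ncard_add_ncard_compl ({0, s} : Set R)
      rw [Set.ncard_pair hs0.symm] at hcompl
      rw [degIn_centre, degIn_centre, zeroFibre_compl, zeroFibre_pair, Set.ncard_singleton]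
      omega
    · refine (degIn_le_one_of_forall_eq (w := oneVertex s ⟨s, hs0, hss⟩)
        fun v hv hadj ↦ ?_).trans (Nat.le_add_left 1 _)
      obtain hvS | rfl | ⟨u, hu, rfl⟩ := vertex_cases_of_maximalIdeal_eq_pair hs0 hm v
      · exact absurd hvS hv
      · rfl
      · exact absurd (hu.mul_left_eq_zero.1 (mul_eq_zero_of_zdGraph_adj_zeroVertex hadj)) hs0
  · obtain hvS | rfl | ⟨u, hu, rfl⟩ := vertex_cases_of_maximalIdeal_eq_pair hs0 hm v
    · exact absurd hvS hv
    · exact ⟨zeroVertex s hs0, by simp [hS], zdGraph_adj_oneVertex_zeroVertex.2 hss⟩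
    · exact ⟨centre R, by simp [hS], (zdGraph_adj_oneVertex_zeroVertex.2 (zero_mul u)).symm⟩

theorem isGlobalDefensiveAlliance_compl_pair :
    IsGlobalDefensiveAlliance (zdGraph (ZMod 2 × R)) {centre R, zeroVertex s hs0}ᶜ := by
  have hss := mul_self_eq_zero_of_maximalIdeal_eq_pair hs0 hm
  have hs : ¬ IsUnit s := hm.ge (by simp)
  set S : Set (ZDV (ZMod 2 × R)) := {centre R, zeroVertex s hs0}
  have hzero : zeroVertex 1 one_ne_zero ∉ S := by
    rintro (h | h)
    · exact oneVertex_ne_zeroVertex h.symm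
    · exact hs (zeroVertex_inj.1 h ▸ isUnit_one)
  have hone : oneVertex s ⟨s, hs0, hss⟩ ∉ S := by
    rintro (h | h)
    · exact hs0 (oneVertex_inj.1 h)
    · exact oneVertex_ne_zeroVertex h
  refine ⟨⟨⟨_, hone⟩, fun v hv ↦ ?_⟩, fun v hv ↦ ?_⟩
  · rw [compl_compl]
    refine le_trans ?_ (Nat.le_add_left 1 _)
    obtain hvS | rfl | ⟨u, hu, rfl⟩ := vertex_cases_of_maximalIdeal_eq_pair hs0 hm v
    · exact absurd hvS hv
    · rw [degIn_oneVertex, zeroFibre_pair]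
      exact (Set.ncard_le_ncard (Set.sep_subset _ _)).trans_eq (Set.ncard_singleton s)
    · refine degIn_le_one_of_forall_eq (w := centre R) fun v _ hadj ↦ ?_
      exact (neighborSet_zeroVertex_of_mem_nonZeroDivisors hu.mem_nonZeroDivisors).le hadj
  · obtain rfl | rfl := not_not.1 hv
    · exact ⟨_, hzero, zdGraph_adj_oneVertex_zeroVertex.2 (zero_mul 1)⟩
    · exact ⟨_, hone, (zdGraph_adj_oneVertex_zeroVertex.2 hss).symm⟩

end MaximalIdealPair

theorem natCard_eq_four_of_partitionableGDA [Finite R] (hR : ¬ IsField R)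
    (h : PartitionableGDA (zdGraph (ZMod 2 × R))) : Nat.card R = 4 := by
  obtain ⟨S, hcentre, hS, hSc⟩ := (partitionableGDA_iff_exists_mem (centre R)).1 h
  have hfibre := insert_zero_zeroFibre_eq_maximalIdeal hcentre hS.1 hSc.2
  obtain ⟨s, hs, hs0⟩ := Submodule.exists_mem_ne_zero_of_ne_bot
    (mt isField_iff_maximalIdeal_eq.2 hR)
  exact natCard_eq_four_of_maximalIdeal_eq_pair hs0 <|
    maximalIdeal_eq_pair_of_forall_annihilator
      (fun _ ↦ exists_annihilator_eq_pair hcentre hfibre hSc) hs hs0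

theorem partitionableGDA_of_natCard_eq_four (hR : ¬ IsField R) (hcard : Nat.card R = 4) :
    PartitionableGDA (zdGraph (ZMod 2 × R)) := by
  have : Finite R := Nat.finite_of_card_ne_zero (by omega)
  obtain ⟨s, hs0, hm⟩ := exists_maximalIdeal_eq_pair_of_natCard_eq_four hR hcard
  exact (partitionableGDA_iff_exists_mem (centre R)).2 ⟨_, Set.mem_insert _ _,
    isGlobalDefensiveAlliance_pair hs0 hm, isGlobalDefensiveAlliance_compl_pair hs0 hm⟩

end Partition

/-- For a finite local commutative ring `R` which is not a field,
`Γ(ℤ₂ × R)` is partitionable into global defensive alliances iff `R ≅ ℤ₄` or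
`R ≅ ℤ₂[X]/(X²)`; moreover in that case `ψ_g(Γ(ℤ₂ × R)) = 2`. -/
theorem stmt6 (R : Type*) [CommRing R] [IsLocalRing R] [Finite R] (hR : ¬ IsField R) :
    (PartitionableGDA (zdGraph (ZMod 2 × R)) ↔
      (Nonempty (R ≃+* ZMod 4) ∨
        Nonempty (R ≃+* (Polynomial (ZMod 2) ⧸
          Ideal.span {(Polynomial.X : Polynomial (ZMod 2)) ^ 2})))) ∧
    (PartitionableGDA (zdGraph (ZMod 2 × R)) →
      psiG (zdGraph (ZMod 2 × R)) = 2) := by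
  have hred : ¬ IsReduced R := fun _ ↦
    hR (IsArtinianRing.isField_of_isReduced_of_isLocalRing R)
  rw [← natCard_eq_four_iff_of_not_isReduced hred]
  exact ⟨⟨natCard_eq_four_of_partitionableGDA hR, partitionableGDA_of_natCard_eq_four hR⟩,
    fun h ↦ le_antisymm (psiG_zdGraph_zmod_two_prod_le_two R) h⟩
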